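/- arXiv:2108.08223 — 3 statements merged into one kernel-verified Lean document; each statement's English description precedes it below -/
import Mathlib

section
/- Let α, β be real numbers with α > |β|, let M be the 2×2 matrix !![α, β; β, α], and let S be the unique symmetric positive definite square root of M. Then the spectrum over ℂ of the 4×4 block matrix fromBlocks 0 S S 0 is exactly the set {√(α+β), √(α−β), −√(α+β), −√(α−β)} (real numbers coerced to ℂ). -/
/-!
Let `T` be the complexification of `S` and `H = fromBlocks 0 T T 0`. Then `z - H` is `fromBlocks z (-T) (-T) z`, whose
determinant is `det (z - T) * det (z + T) = det (z² - T²)`. As `T² = !![α, β; β, α]`, this is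
`(z² - (α + β)) * (z² - (α - β))`, and `α ± β ≥ 0` because `|β| < α`, so its zeros are the four
signed square roots.
-/

/-- Adding the second block row to the first and then subtracting the first block column from the
second makes the matrix block lower triangular; `A` and `B` need not commute. -/
theorem det_fromBlocks_symm {n R : Type*} [Fintype n] [DecidableEq n] [CommRing R]
    (A B : Matrix n n R) :
    (Matrix.fromBlocks A B B A).det = (A + B).det * (A - B).det := by
  have h : Matrix.fromBlocks 1 1 0 1 * Matrix.fromBlocks A B B A * Matrix.fromBlocks 1 (-1) 0 1
      = Matrix.fromBlocks (A + B) 0 B (A - B) := by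
    simp only [Matrix.fromBlocks_multiply]
    congr 1 <;> simp
    all_goals abel
  have h' := congrArg Matrix.det h
  simpa [Matrix.det_mul, Matrix.det_fromBlocks_zero₂₁, Matrix.det_fromBlocks_zero₁₂] using h'

/-- The spectrum of the static Hamiltonian of two resonators with generalised capacitance
matrix `!![α, β; β, α]` (with `α > |β|`) is `{√(α+β), √(α−β), −√(α+β), −√(α−β)}`. -/
theorem stmt_5 (α β : ℝ) (hαβ : |β| < α)
    (S : Matrix (Fin 2) (Fin 2) ℝ) (hS : S.IsSymm) (hSpd : S.PosDef)
    (hSsq : S * S = !![α, β; β, α]) :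
    spectrum ℂ (Matrix.fromBlocks 0 (S.map Complex.ofReal) (S.map Complex.ofReal) 0) =
      {((Real.sqrt (α + β) : ℝ) : ℂ), ((Real.sqrt (α - β) : ℝ) : ℂ),
        ((-Real.sqrt (α + β) : ℝ) : ℂ), ((-Real.sqrt (α - β) : ℝ) : ℂ)} := by
  obtain ⟨h1, h2⟩ := abs_lt.mp hαβ
  set T : Matrix (Fin 2) (Fin 2) ℂ := S.map Complex.ofReal with hT
  have hTsq : T * T = !![(α : ℂ), β; β, α] := by
    have h := congrArg (fun M : Matrix (Fin 2) (Fin 2) ℝ => M.map Complex.ofRealHom) hSsq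
    simp only [Matrix.map_mul] at h
    refine Eq.trans h ?_
    ext i j
    fin_cases i <;> fin_cases j <;> rfl
  have hp : ((Real.sqrt (α + β) : ℝ) : ℂ) ^ 2 = α + β := by
    rw [← Complex.ofReal_pow, Real.sq_sqrt (by linarith), Complex.ofReal_add]
  have hm : ((Real.sqrt (α - β) : ℝ) : ℂ) ^ 2 = α - β := by
    rw [← Complex.ofReal_pow, Real.sq_sqrt (by linarith), Complex.ofReal_sub]
  ext z
  have hblock : algebraMap ℂ (Matrix (Fin 2 ⊕ Fin 2) (Fin 2 ⊕ Fin 2) ℂ) z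
      - Matrix.fromBlocks 0 T T 0
      = Matrix.fromBlocks (z • 1) (-T) (-T) (z • 1) := by
    rw [Algebra.algebraMap_eq_smul_one, ← Matrix.fromBlocks_one, Matrix.fromBlocks_smul,
      sub_eq_add_neg, Matrix.fromBlocks_neg, Matrix.fromBlocks_add]
    simp
  have hdet : (Matrix.fromBlocks (z • 1) (-T) (-T) (z • 1)).det
      = (z ^ 2 - (α + β)) * (z ^ 2 - (α - β)) := by
    have hmul : (z • 1 + -T) * (z • 1 - -T) = (z ^ 2) • 1 - !![(α : ℂ), β; β, α] := by
      rw [← hTsq]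
      simp only [sub_neg_eq_add, add_mul, mul_add, smul_mul_assoc, mul_smul_comm, one_mul,
        mul_one, neg_mul, pow_two, mul_smul, smul_add, smul_neg]
      abel
    rw [det_fromBlocks_symm, ← Matrix.det_mul, hmul, Matrix.det_fin_two]
    simp
    ring
  rw [spectrum.mem_iff, hblock, Matrix.isUnit_iff_isUnit_det, hdet, isUnit_iff_ne_zero, not_not,
    mul_eq_zero, sub_eq_zero, sub_eq_zero, ← hp, ← hm, sq_eq_sq_iff_eq_or_eq_neg,
    sq_eq_sq_iff_eq_or_eq_neg]
  simp only [Set.mem_insert_iff, Set.mem_singleton_iff, Complex.ofReal_neg]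
  tauto
end

section
/- Let N ≥ 1, let C be a real N×N matrix, let δ, κ_r, ρ_r > 0 and |D_i| > 0 for i = 1,…,N, and let ρ_i, κ_i : ℝ → ℝ be positive functions with ρ_i twice differentiable and κ_i three times differentiable. Suppose c : ℝ → ℝ^N has twice differentiable components and satisfies, for all i and all t, Σ_{j=1}^N C_{ij} c_j(t) = −(|D_i| ρ_r/(δ κ_r)) · (1/ρ_i(t)) · d/dt[ (1/κ_i(t)) · d/dt( ρ_i(t) c_i(t) ) ]. Then the vector Ψ(t) with components Ψ_i(t) = ρ_i(t) c_i(t)/√κ_i(t) satisfies Ψ''(t) + M(t)Ψ(t) = 0 for all t, where M(t) = (δκ_r/ρ_r)·W₁(t)·C·W₂(t) + W₃(t) and W₁, W₂, W₃ are the diagonal N×N matrices with diagonal entries (W₁)_{ii} = √κ_i(t)·ρ_i(t)/|D_i|, (W₂)_{ii} = √κ_i(t)/ρ_i(t), (W₃)_{ii} = (√κ_i(t)/2)·d/dt[ κ_i'(t)/κ_i(t)^{3/2} ]. -/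
/-! Fix `i` and put `y = ρ c`, `p = y' / κ`, `q = κ' / κ ^ (3/2)`, `Ψ = y / √κ`. Then
`Ψ' = √κ p - y q / 2`, and on differentiating again the two terms involving `p` itself cancel, because
`(√κ)' p = κ' p / (2 √κ) = y' q / 2`. Hence `Ψ'' = √κ p' - y q' / 2` (`deriv_deriv_div_sqrt`).
The ODE turns `p'` into `-(δ κr / (|D| ρr)) ρ (C c)`, which is the `W₁ C W₂` term since
`W₂ Ψ = c`, and `y q' / 2` is the `W₃` term. -/

open Matrix

/-- The second-order operator with `y` mapped to the derivative of `y' / k` loses its first-order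
term under the change of variables `y ↦ y / √k`. -/
theorem deriv_deriv_div_sqrt (y k : ℝ → ℝ) (hk0 : ∀ t, 0 < k t)
    (hy : Differentiable ℝ y) (hy' : Differentiable ℝ (deriv y))
    (hk : Differentiable ℝ k) (hk' : Differentiable ℝ (deriv k)) (t : ℝ) :
    deriv (deriv (fun s => y s / √(k s))) t =
      √(k t) * deriv (fun s => (1 / k s) * deriv y s) t -
        y t / 2 * deriv (fun s => deriv k s / (k s) ^ ((3 : ℝ) / 2)) t := by
  have hpow (s : ℝ) : (k s) ^ ((3 : ℝ) / 2) = k s * √(k s) := by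
    rw [Real.sqrt_eq_rpow, show (3 : ℝ) / 2 = 1 + 1 / 2 by norm_num,
      Real.rpow_add (hk0 s), Real.rpow_one]
  have hs0 (s : ℝ) : √(k s) ≠ 0 := (Real.sqrt_pos.2 (hk0 s)).ne'
  have hsq (s : ℝ) : √(k s) ^ 2 = k s := Real.sq_sqrt (hk0 s).le
  have hsd (s : ℝ) : HasDerivAt (fun r => √(k r)) (deriv k s / (2 * √(k s))) s :=
    (hk s).hasDerivAt.sqrt (hk0 s).ne'
  have hΨ : deriv (fun s => y s / √(k s)) = fun s =>
      √(k s) * ((1 / k s) * deriv y s) -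
        y s / 2 * (deriv k s / (k s) ^ ((3 : ℝ) / 2)) := by
    funext s
    rw [((hy s).hasDerivAt.fun_div (hsd s) (hs0 s)).deriv, hpow, ← hsq s,
      Real.sqrt_sq (Real.sqrt_nonneg _)]
    have := hs0 s
    field_simp
  have hp : DifferentiableAt ℝ (fun s => (1 / k s) * deriv y s) t :=
    ((differentiableAt_const _).fun_div (hk t) (hk0 t).ne').fun_mul (hy' t)
  have hq : DifferentiableAt ℝ (fun s => deriv k s / (k s) ^ ((3 : ℝ) / 2)) t := by
    simp only [hpow]
    exact (hk' t).fun_div ((hk t).fun_mul (hsd t).differentiableAt)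
      (mul_ne_zero (hk0 t).ne' (hs0 t))
  rw [hΨ, (((hsd t).fun_mul hp.hasDerivAt).fun_sub
    (((hy t).hasDerivAt.div_const 2).fun_mul hq.hasDerivAt)).deriv, hpow]
  have := hs0 t
  have := (hk0 t).ne'
  field_simp
  ring

/-- The capacitance-matrix ODE for modulated subwavelength resonators is equivalent to a
system of Hill equations `Ψ'' + M(t)Ψ = 0` with
`M(t) = (δκ_r/ρ_r)·W₁(t)·C·W₂(t) + W₃(t)`. -/
theorem stmt_8 {N : ℕ} (hN : 1 ≤ N)
    (C : Matrix (Fin N) (Fin N) ℝ)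
    (δ κr ρr : ℝ) (hδ : 0 < δ) (hκr : 0 < κr) (hρr : 0 < ρr)
    (vol : Fin N → ℝ) (hvol : ∀ i, 0 < vol i)
    (ρ κ : Fin N → ℝ → ℝ)
    (hρpos : ∀ i t, 0 < ρ i t) (hκpos : ∀ i t, 0 < κ i t)
    (hρ : ∀ i, Differentiable ℝ (ρ i)) (hρ' : ∀ i, Differentiable ℝ (deriv (ρ i)))
    (hκ : ∀ i, Differentiable ℝ (κ i)) (hκ' : ∀ i, Differentiable ℝ (deriv (κ i)))
    (hκ'' : ∀ i, Differentiable ℝ (deriv (deriv (κ i))))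
    (c : ℝ → Fin N → ℝ)
    (hc : ∀ i, Differentiable ℝ (fun t => c t i))
    (hc' : ∀ i, Differentiable ℝ (deriv (fun t => c t i)))
    (hODE : ∀ (i : Fin N) (t : ℝ),
      ∑ j, C i j * c t j =
        -((vol i * ρr / (δ * κr)) * (1 / ρ i t) *
          deriv (fun s => (1 / κ i s) * deriv (fun r => ρ i r * c r i) s) t)) :
    ∀ (i : Fin N) (t : ℝ),
      deriv (deriv (fun s => ρ i s * c s i / Real.sqrt (κ i s))) t +
        ∑ j,
          ((δ * κr / ρr) •
              (Matrix.diagonal (fun k => Real.sqrt (κ k t) * ρ k t / vol k) * C *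
                Matrix.diagonal (fun k => Real.sqrt (κ k t) / ρ k t)) +
            Matrix.diagonal (fun k =>
              Real.sqrt (κ k t) / 2 *
                deriv (fun s => deriv (κ k) s / (κ k s) ^ ((3 : ℝ) / 2)) t)) i j *
            (ρ j t * c t j / Real.sqrt (κ j t)) = 0 := by
  intro i t
  have hy : Differentiable ℝ (fun s => ρ i s * c s i) := (hρ i).fun_mul (hc i)
  have hy' : Differentiable ℝ (deriv (fun s => ρ i s * c s i)) := by
    have h : deriv (fun s => ρ i s * c s i) =
        fun s => deriv (ρ i) s * c s i + ρ i s * deriv (fun r => c r i) s := by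
      funext s
      exact deriv_fun_mul (hρ i s) (hc i s)
    rw [h]
    exact ((hρ' i).fun_mul (hc i)).fun_add ((hρ i).fun_mul (hc' i))
  rw [deriv_deriv_div_sqrt _ _ (hκpos i) hy hy' (hκ i) (hκ' i) t]
  have hs0 (j : Fin N) : √(κ j t) ≠ 0 := (Real.sqrt_pos.2 (hκpos j t)).ne'
  have hW₂ (j : Fin N) : √(κ j t) / ρ j t * (ρ j t * c t j / √(κ j t)) = c t j := by
    have := hs0 j
    have := (hρpos j t).ne'
    field_simp
  have hC : ∑ j, δ * κr / ρr * (√(κ i t) * ρ i t / vol i * C i j * (√(κ j t) / ρ j t)) *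
        (ρ j t * c t j / √(κ j t)) =
      δ * κr / ρr * (√(κ i t) * ρ i t / vol i) * ∑ j, C i j * c t j := by
    rw [Finset.mul_sum]
    refine Finset.sum_congr rfl fun j _ => ?_
    linear_combination (δ * κr / ρr * (√(κ i t) * ρ i t / vol i) * C i j) * hW₂ j
  simp only [Matrix.add_apply, Matrix.smul_apply, Matrix.mul_diagonal, Matrix.diagonal_mul,
    smul_eq_mul, add_mul, Finset.sum_add_distrib]
  rw [hC, hODE i t]
  simp only [Matrix.diagonal_apply, ite_mul, zero_mul, Finset.sum_ite_eq, Finset.mem_univ, if_true]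
  have := hs0 i
  have := (hρpos i t).ne'
  have := (hvol i).ne'
  field_simp
  ring
end

section
/- Let N ≥ 1, let D be an N×N real diagonal matrix with strictly positive diagonal entries, and let M¹ : ℝ → Matrix N N ℝ be continuous. Write D^{1/2} and D^{−1/2} for the diagonal matrices with entries √(D_{ii}) and 1/√(D_{ii}). Then there exist continuously differentiable matrix-valued functions T₁, T₂, T₃, T₄ : ℝ → Matrix N N ℂ with T₁(0) = T₂(0) = T₃(0) = T₄(0) = 0 such that for every t ∈ ℝ the (2N)×(2N) complex block matrix H¹(t) with blocks H¹₁₁ = i·T₁'(t)·D^{−1/2} − i·T₂(t)·D^{1/2} − D^{1/2}·T₃(t)·D^{−1/2}, H¹₁₂ = T₂'(t) + T₁(t) + i·D^{1/2}·T₄(t), H¹₂₁ = i·T₃'(t)·D^{−1/2} − i·T₄(t)·D^{1/2} + D^{−1/2}·M¹(t) − D^{1/2}·T₁(t)·D^{−1/2}, H¹₂₂ = T₄'(t) + T₃(t) + i·D^{1/2}·T₂(t), is Hermitian. -/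
open Matrix

attribute [local instance] Matrix.normedAddCommGroup Matrix.normedSpace

/-!
The blocks can be chosen so that `H¹` vanishes identically. The equation `H¹ = 0` decouples into
one linear system per matrix entry `(i, j)`: with `p = √dᵢ`, `q = √dⱼ` and `f = i (q / p) M¹ᵢⱼ`,
the entries `a, b, c, e` of `T₁, T₂, T₃, T₄` must solve
`a' = q² b - i p c`, `b' = -a - i p e`, `c' = q² e - i p a + f`, `e' = -c - i p b`.
The four combinations `(a ± c) ± i q (b ± e)` diagonalise this system, turning it into scalar
equations `r' = lam r ± f` (`exists_scalar_ode`), solved by the variation of constants formula;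
`exists_entry_ode` recombines them.
-/

/-- Variation of constants: the solution is `r t = exp (lam t) * ∫₀ᵗ exp (-lam s) f s ds`. -/
lemma exists_scalar_ode (lam : ℂ) (f : ℝ → ℂ) (hf : Continuous f) :
    ∃ r : ℝ → ℂ, r 0 = 0 ∧ ∀ t, HasDerivAt r (lam * r t + f t) t := by
  have hg : Continuous fun s : ℝ => Complex.exp (-(lam * s)) * f s := by fun_prop
  refine ⟨fun t => Complex.exp (lam * t) * ∫ s in (0 : ℝ)..t, Complex.exp (-(lam * s)) * f s,
    by simp, fun t => ?_⟩
  have h1 : HasDerivAt (fun t : ℝ => Complex.exp (lam * t)) (Complex.exp (lam * t) * lam) t := by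
    have := ((Complex.ofRealCLM.hasDerivAt (x := t)).const_mul lam).cexp
    simpa using this
  have h2 := hg.integral_hasStrictDerivAt 0 t |>.hasDerivAt
  have h3 : Complex.exp (lam * t) * Complex.exp (-(lam * t)) = 1 := by
    rw [← Complex.exp_add]; simp
  refine (h1.mul h2).congr_deriv ?_
  linear_combination f t * h3

/-- The system satisfied by one entry of `T₁, T₂, T₃, T₄` when `H¹ = 0`. -/
lemma exists_entry_ode (p q : ℂ) (hq : q ≠ 0) (f : ℝ → ℂ) (hf : Continuous f) :
    ∃ a b c e : ℝ → ℂ, a 0 = 0 ∧ b 0 = 0 ∧ c 0 = 0 ∧ e 0 = 0 ∧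
      (∀ t, HasDerivAt a (q ^ 2 * b t - Complex.I * p * c t) t) ∧
      (∀ t, HasDerivAt b (-a t - Complex.I * p * e t) t) ∧
      (∀ t, HasDerivAt c (q ^ 2 * e t - Complex.I * p * a t + f t) t) ∧
      (∀ t, HasDerivAt e (-c t - Complex.I * p * b t) t) := by
  -- `r, s, w, z` stand for `(a + c) ± i q (b + e)` and `(a - c) ± i q (b - e)`.
  obtain ⟨r, r0, hr⟩ := exists_scalar_ode (-Complex.I * (p + q)) f hf
  obtain ⟨s, s0, hs⟩ := exists_scalar_ode (-Complex.I * (p - q)) f hf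
  obtain ⟨w, w0, hw⟩ := exists_scalar_ode (Complex.I * (p - q)) (fun t => -f t) hf.neg
  obtain ⟨z, z0, hz⟩ := exists_scalar_ode (Complex.I * (p + q)) (fun t => -f t) hf.neg
  refine ⟨fun t => (r t + s t + (w t + z t)) / 4,
    fun t => -Complex.I * (r t - s t + (w t - z t)) / (4 * q),
    fun t => (r t + s t - (w t + z t)) / 4,
    fun t => -Complex.I * (r t - s t - (w t - z t)) / (4 * q),
    by simp [*], by simp [*], by simp [*], by simp [*], fun t => ?_, fun t => ?_,
    fun t => ?_, fun t => ?_⟩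
  · refine ((((hr t).add (hs t)).add ((hw t).add (hz t))).div_const 4).congr_deriv ?_
    field_simp
    ring
  · refine (((((hr t).sub (hs t)).add ((hw t).sub (hz t))).const_mul
      (-Complex.I)).div_const (4 * q)).congr_deriv ?_
    field_simp
    ring_nf
    simp only [Complex.I_sq]
    ring
  · refine ((((hr t).add (hs t)).sub ((hw t).add (hz t))).div_const 4).congr_deriv ?_
    field_simp
    ring
  · refine (((((hr t).sub (hs t)).sub ((hw t).sub (hz t))).const_mul
      (-Complex.I)).div_const (4 * q)).congr_deriv ?_
    field_simp
    ring_nf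
    simp only [Complex.I_sq]
    ring

lemma contDiff_one_of_hasDerivAt {f g : ℝ → ℂ} (h : ∀ t, HasDerivAt f (g t) t)
    (hg : Continuous g) : ContDiff ℝ 1 f := by
  rw [contDiff_one_iff_deriv]
  refine ⟨fun t => (h t).differentiableAt, ?_⟩
  rwa [funext fun t => (h t).deriv]

/-- Existence of continuously differentiable blocks `T₁, T₂, T₃, T₄` of the first-order part
of the transformation, vanishing at `t = 0`, making the first-order Hamiltonian `H¹(t)`
Hermitian for all times. -/
theorem stmt_9 {N : ℕ} (hN : 1 ≤ N) (d : Fin N → ℝ) (hd : ∀ i, 0 < d i)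
    (M₁ : ℝ → Matrix (Fin N) (Fin N) ℝ) (hM₁ : Continuous M₁) :
    ∃ T₁ T₂ T₃ T₄ : ℝ → Matrix (Fin N) (Fin N) ℂ,
      ContDiff ℝ 1 T₁ ∧ ContDiff ℝ 1 T₂ ∧ ContDiff ℝ 1 T₃ ∧ ContDiff ℝ 1 T₄ ∧
        T₁ 0 = 0 ∧ T₂ 0 = 0 ∧ T₃ 0 = 0 ∧ T₄ 0 = 0 ∧
        ∀ t : ℝ,
          let Dp : Matrix (Fin N) (Fin N) ℂ :=
            Matrix.diagonal fun i => ((Real.sqrt (d i) : ℝ) : ℂ)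
          let Dm : Matrix (Fin N) (Fin N) ℂ :=
            Matrix.diagonal fun i => ((1 / Real.sqrt (d i) : ℝ) : ℂ)
          (Matrix.fromBlocks
              (Complex.I • (deriv T₁ t * Dm) - Complex.I • (T₂ t * Dp) - Dp * T₃ t * Dm)
              (deriv T₂ t + T₁ t + Complex.I • (Dp * T₄ t))
              (Complex.I • (deriv T₃ t * Dm) - Complex.I • (T₄ t * Dp) +
                Dm * (M₁ t).map Complex.ofReal - Dp * T₁ t * Dm)
              (deriv T₄ t + T₃ t + Complex.I • (Dp * T₂ t))).IsHermitian := by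
  have hM (i j) : Continuous fun t => M₁ t i j := hM₁.matrix_elem i j
  have hp (i) : ((√(d i) : ℝ) : ℂ) ≠ 0 := by
    simpa using (Real.sqrt_pos.2 (hd i)).ne'
  have key (i j : Fin N) := exists_entry_ode (√(d i) : ℝ) (√(d j) : ℝ) (hp j)
    (fun t => Complex.I * ((√(d j) : ℝ) / (√(d i) : ℝ)) * (M₁ t i j : ℂ))
    (continuous_const.mul (Complex.continuous_ofReal.comp (hM i j)))
  choose a b c e a0 b0 c0 e0 ha hb hc he using key
  have ca (i j) : Continuous (a i j) :=
    continuous_iff_continuousAt.2 fun t => (ha i j t).continuousAt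
  have cb (i j) : Continuous (b i j) :=
    continuous_iff_continuousAt.2 fun t => (hb i j t).continuousAt
  have cc (i j) : Continuous (c i j) :=
    continuous_iff_continuousAt.2 fun t => (hc i j t).continuousAt
  have ce (i j) : Continuous (e i j) :=
    continuous_iff_continuousAt.2 fun t => (he i j t).continuousAt
  have hderiv {x y : Fin N → Fin N → ℝ → ℂ} (h : ∀ i j t, HasDerivAt (x i j) (y i j t) t) (t : ℝ) :
      deriv (fun t => Matrix.of fun i j => x i j t) t = Matrix.of fun i j => y i j t :=
    (hasDerivAt_pi.2 fun i => hasDerivAt_pi.2 fun j => h i j t).deriv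
  refine ⟨fun t => .of fun i j => a i j t, fun t => .of fun i j => b i j t,
    fun t => .of fun i j => c i j t, fun t => .of fun i j => e i j t,
    contDiff_pi.2 fun i => contDiff_pi.2 fun j => contDiff_one_of_hasDerivAt (ha i j) ?_,
    contDiff_pi.2 fun i => contDiff_pi.2 fun j => contDiff_one_of_hasDerivAt (hb i j) ?_,
    contDiff_pi.2 fun i => contDiff_pi.2 fun j => contDiff_one_of_hasDerivAt (hc i j) ?_,
    contDiff_pi.2 fun i => contDiff_pi.2 fun j => contDiff_one_of_hasDerivAt (he i j) ?_,
    ?_, ?_, ?_, ?_, ?_⟩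
  · fun_prop
  · fun_prop
  · have := hM i j
    fun_prop
  · fun_prop
  · ext i j; exact a0 i j
  · ext i j; exact b0 i j
  · ext i j; exact c0 i j
  · ext i j; exact e0 i j
  · intro t Dp Dm
    rw [hderiv ha, hderiv hb, hderiv hc, hderiv he]
    convert Matrix.isHermitian_zero using 1
    rw [← Matrix.fromBlocks_zero]
    congr 1
    · ext i j
      have := hp j
      simp only [Dp, Dm, Matrix.add_apply, Matrix.sub_apply, Matrix.smul_apply, Matrix.of_apply,
        Matrix.diagonal_mul, Matrix.mul_diagonal, Matrix.zero_apply, smul_eq_mul]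
      push_cast
      field_simp
      ring_nf
      simp only [Complex.I_sq]
      ring
    · ext i j
      simp only [Dp, Dm, Matrix.add_apply, Matrix.sub_apply, Matrix.smul_apply, Matrix.of_apply,
        Matrix.diagonal_mul, Matrix.mul_diagonal, Matrix.zero_apply, smul_eq_mul]
      ring
    · ext i j
      have := hp j
      have := hp i
      simp only [Dp, Dm, Matrix.add_apply, Matrix.sub_apply, Matrix.smul_apply, Matrix.of_apply,
        Matrix.diagonal_mul, Matrix.mul_diagonal, Matrix.zero_apply, smul_eq_mul,
        Matrix.map_apply]
      push_cast
      field_simp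
      ring_nf
      simp only [Complex.I_sq]
      ring
    · ext i j
      simp only [Dp, Dm, Matrix.add_apply, Matrix.sub_apply, Matrix.smul_apply, Matrix.of_apply,
        Matrix.diagonal_mul, Matrix.mul_diagonal, Matrix.zero_apply, smul_eq_mul]
      ring
end
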